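/- Let N > K ≥ 1 and fix X ∈ 𝔾_N. Let M be a probability measure on the countable set 𝔾_K such that M(Y) = 0 unless Y is contained in a certain fixed bounded interval [a,b] ⊂ ℝ. If Σ_{Y ∈ 𝔾_K} M(Y) · S̃_{ν|K}(Y) = S̃_{ν|N}(X) for every partition ν ∈ 𝕐(K), then M(Y) = Λ^N_K(X,Y) for all Y ∈ 𝔾_K. -/

import Mathlib

open scoped BigOperators
open Classical

noncomputable section

def Lambda (q zm zp : ℝ) : Set ℝ :=
  {x | ∃ m : ℤ, x = zm * q ^ m} ∪ {x | ∃ n : ℤ, x = zp * q ^ n}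

def qInterval (q zm zp a b : ℝ) : Set ℝ :=
  if b < 0 then Set.Ico a b ∩ Lambda q zm zp
  else if a < 0 then Set.Icc a b ∩ Lambda q zm zp
  else Set.Ioc a b ∩ Lambda q zm zp

def Conf (q zm zp : ℝ) (N : ℕ) : Type :=
  {x : Fin N → ℝ // StrictMono x ∧ ∀ i, x i ∈ Lambda q zm zp}

def Interlaces (q zm zp : ℝ) {N : ℕ} (Y : Conf q zm zp N) (X : Conf q zm zp (N+1)) : Prop :=
  ∀ i : Fin N, Y.1 i ∈ qInterval q zm zp (X.1 i.castSucc) (X.1 i.succ)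

def vprod {N : ℕ} (x : Fin N → ℝ) : ℝ :=
  ∏ p ∈ Finset.univ.filter (fun p : Fin N × Fin N => p.1 < p.2), (x p.2 - x p.1)

def qpochR (a q : ℝ) (n : ℕ) : ℝ := ∏ m ∈ Finset.range n, (1 - a * q ^ m)

def qlink (q zm zp : ℝ) (N : ℕ) (X : Conf q zm zp (N+1)) (Y : Conf q zm zp N) : ℝ :=
  if Interlaces q zm zp Y X then
    (∏ i, |Y.1 i|) * qpochR q q N * vprod Y.1 / vprod X.1
  else 0

/-- The multi-step link Λ^{K+d}_K, the composition of one-step q-links. -/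
def linkPow (q zm zp : ℝ) (K : ℕ) : (d : ℕ) → Conf q zm zp (K + d) → Conf q zm zp K → ℝ
  | 0, X, Y => if X = Y then 1 else 0
  | (d+1), X, Y =>
      ∑' Z : Conf q zm zp (K + d), qlink q zm zp (K + d) X Z * linkPow q zm zp K d Z Y

/-- The Schur Laurent polynomial S_{λ|N}(u) = det[u_j^{λ_i+N−i}] / ∏_{i<j}(u_i−u_j). -/
def schurL (N : ℕ) (l : Fin N → ℤ) (u : Fin N → ℝ) : ℝ :=
  (Matrix.of fun i j : Fin N => u j ^ (l i + (N : ℤ) - 1 - (i : ℕ))).det /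
    ∏ p ∈ Finset.univ.filter (fun p : Fin N × Fin N => p.1 < p.2), (u p.1 - u p.2)

/-- Normalized Schur polynomial S̃_{ν|N}(y) = S_{ν|N}(y)/S_{ν|N}(1,q,…,q^{N−1}). -/
def schurTilde (q : ℝ) (N : ℕ) (l : Fin N → ℤ) (y : Fin N → ℝ) : ℝ :=
  schurL N l y / schurL N l (fun i => q ^ (i : ℕ))

/-- A signature of length K padded by zeros to length N. -/
def padSig (K N : ℕ) (ν : Fin K → ℤ) : Fin N → ℤ :=
  fun i => if h : (i : ℕ) < K then ν ⟨i, h⟩ else 0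

/-!
Subtracting `Λ^N_K(X, ·)` from `M` leaves a function `D` on `𝔾_K` of bounded support, and the links
satisfy the moment relations themselves: after conjugation by Vandermonde products the one-step
link is an indicator of interlacing weighted by `∏ |y_i|`, so summing an alternant `det (y_j ^ m_i)`
against it reduces to Jackson integrals `∑ |y| y ^ m_i` over the intervals `I(x_j, x_{j+1})`, and
the result is the alternant for the partition with one more zero part. Fubini carries this through
the iteration. Hence every alternant sums to zero against `D / ∏_{i<j} (y_j - y_i)`. Expanding
`det (y_j ^ i * p(y_j)) = ∏ p(y_j) * ∏_{i<j} (y_j - y_i)` into alternants gives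
`∑_Y D(Y) ∏ p(y_j) = 0` for all polynomials `p`, and for continuous `p` by Weierstrass
approximation. Since `0` is the only accumulation point of the lattice, a continuous function can be
`1` on the points of a configuration `Z` and `0` on the rest of the lattice; it isolates `D(Z)`.
-/

/-- The alternant `det (u_j ^ m_i)`, the numerator of a Schur polynomial. Exponents are listed in
increasing order: a partition `ν` with `K` parts corresponds to `m_i = ν_{K-1-i} + i`. -/
def alternant {n R : Type*} [Fintype n] [DecidableEq n] [CommRing R] (m : n → ℕ) (u : n → R) : R :=
  (Matrix.of fun i j => u j ^ m i).det

section Alternant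

variable {R : Type*} [CommRing R]

lemma alternant_comp_perm {n : Type*} [Fintype n] [DecidableEq n] (m : n → ℕ)
    (σ : Equiv.Perm n) (u : n → R) :
    alternant (m ∘ σ) u = (Equiv.Perm.sign σ : ℤ) * alternant m u :=
  Matrix.det_permute σ (Matrix.of fun i j => u j ^ m i)

lemma alternant_eq_zero_of_not_injective {n : Type*} [Fintype n] [DecidableEq n] {m : n → ℕ}
    (hm : ¬ Function.Injective m) (u : n → R) : alternant m u = 0 := by
  obtain ⟨i, j, hij, hne⟩ := Function.not_injective_iff.1 hm
  exact Matrix.det_zero_of_row_eq hne (by ext k; simp [hij])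

lemma alternant_val_eq_det_vandermonde {n : ℕ} (u : Fin n → R) :
    alternant (Fin.val : Fin n → ℕ) u = (Matrix.vandermonde u).det :=
  Matrix.det_transpose (Matrix.vandermonde u)

lemma alternant_pow_eq_det_vandermonde {n : ℕ} (m : Fin n → ℕ) (x : R) :
    alternant m (fun i : Fin n => x ^ (i : ℕ)) =
      (Matrix.vandermonde fun i => x ^ m i).det := by
  simp only [alternant, Matrix.vandermonde, pow_right_comm]

lemma det_eval_eq_sum_alternant {n : Type*} [Fintype n] [DecidableEq n] (p : n → Polynomial R)
    (u : n → R) :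
    (Matrix.of fun i j => (p i).eval (u j)).det =
      ∑ r ∈ Fintype.piFinset fun i => (p i).support,
        (∏ i, (p i).coeff (r i)) * alternant r u := by
  have expand : (Matrix.of fun i j => (p i).eval (u j)) =
      fun i => ∑ c ∈ (p i).support, fun j => (p i).coeff c * u j ^ c := by
    ext i j
    simp only [Matrix.of_apply, Finset.sum_apply, Polynomial.eval_eq_sum, Polynomial.sum_def]
  rw [expand]
  refine (Matrix.detRowAlternating.toMultilinearMap.map_sum_finset
    (fun i c j => (p i).coeff c * u j ^ c) fun i => (p i).support).trans ?_
  exact Finset.sum_congr rfl fun r _ => Matrix.det_mul_column _ (Matrix.of fun i j => u j ^ r i)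

lemma det_eval_X_pow_mul {n : ℕ} (g : Polynomial R) (u : Fin n → R) :
    (Matrix.of fun i j : Fin n => (Polynomial.X ^ (i : ℕ) * g).eval (u j)).det =
      (∏ j, g.eval (u j)) * (Matrix.vandermonde u).det := by
  simp only [Polynomial.eval_mul, Polynomial.eval_pow, Polynomial.eval_X, mul_comm _ (g.eval _)]
  rw [← alternant_val_eq_det_vandermonde]
  exact Matrix.det_mul_row (fun j => g.eval (u j)) (Matrix.of fun i j : Fin n => u j ^ (i : ℕ))

/-- The exponents of a partition after appending a zero part: `(0, m_0 + 1, …, m_{n-1} + 1)`. -/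
def shiftExp {n : ℕ} (m : Fin n → ℕ) : Fin (n + 1) → ℕ :=
  Fin.cons 0 fun i => m i + 1

lemma shiftExp_val (n : ℕ) : shiftExp (Fin.val : Fin n → ℕ) = Fin.val := by
  ext i
  cases i using Fin.cases <;> simp [shiftExp]

lemma alternant_shiftExp {n : ℕ} (m : Fin n → ℕ) (u : Fin (n + 1) → R) :
    alternant (shiftExp m) u =
      (Matrix.of fun i j : Fin n => u j.succ ^ (m i + 1) - u j.castSucc ^ (m i + 1)).det := by
  let B : Matrix (Fin (n + 1)) (Fin (n + 1)) R := Matrix.of fun i j =>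
    Fin.cases (u 0 ^ shiftExp m i)
      (fun j => u j.succ ^ shiftExp m i - u j.castSucc ^ shiftExp m i) j
  have column_diff : alternant (shiftExp m) u = B.det :=
    Matrix.det_eq_of_forall_col_eq_smul_add_pred (fun _ => 1) (by simp [B]) (by simp [B])
  have row_zero : ∀ j, j ≠ 0 → B 0 j = 0 := by
    intro j hj
    obtain ⟨j, rfl⟩ := Fin.exists_succ_eq.2 hj
    simp [B, shiftExp]
  rw [column_diff, Matrix.det_succ_row_zero, Finset.sum_eq_single 0
    (fun j _ hj => by simp [row_zero j hj]) (by simp)]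
  simp [B, shiftExp, Matrix.submatrix, Matrix.of_apply]

end Alternant

section Vandermonde

variable {n : ℕ}

lemma vprod_eq_det_vandermonde (u : Fin n → ℝ) : vprod u = (Matrix.vandermonde u).det := by
  rw [Matrix.det_vandermonde, vprod, Finset.prod_filter, Fintype.prod_prod_type]
  refine Finset.prod_congr rfl fun i _ => ?_
  rw [← Finset.prod_filter, ← Finset.filter_lt_eq_Ioi]

lemma vprod_eq_alternant (u : Fin n → ℝ) : vprod u = alternant (Fin.val : Fin n → ℕ) u := by
  rw [vprod_eq_det_vandermonde, alternant_val_eq_det_vandermonde]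

lemma vprod_pos {u : Fin n → ℝ} (hu : StrictMono u) : 0 < vprod u :=
  Finset.prod_pos fun _ hp => sub_pos.2 (hu (Finset.mem_filter.1 hp).2)

lemma vprod_cons (a : ℝ) (u : Fin n → ℝ) :
    vprod (Fin.cons a u : Fin (n + 1) → ℝ) = (∏ i, (u i - a)) * vprod u := by
  simp only [vprod_eq_det_vandermonde, Matrix.det_vandermonde, Fin.prod_univ_succ,
    Fin.prod_Ioi_zero, Fin.prod_Ioi_succ, Fin.cons_zero, Fin.cons_succ]

lemma vprod_const_mul (c : ℝ) (u : Fin n → ℝ) :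
    vprod (fun i => c * u i) =
      c ^ (Finset.univ.filter fun p : Fin n × Fin n => p.1 < p.2).card * vprod u := by
  simp only [vprod, ← mul_sub, Finset.prod_mul_distrib, Finset.prod_const]

end Vandermonde

section PrincipalSpecialization

/-- The principal specialization `S_ν(1, q, …, q^{n-1})` of the Schur polynomial of exponent `m`. -/
def principalSpec (q : ℝ) {n : ℕ} (m : Fin n → ℕ) : ℝ :=
  alternant m (fun i : Fin n => q ^ (i : ℕ)) / vprod fun i : Fin n => q ^ (i : ℕ)

/-- The normalized Schur polynomial `S̃_{ν|n}(u)`, indexed by the exponents `m` of `ν`. -/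
def normSchur (q : ℝ) {n : ℕ} (m : Fin n → ℕ) (u : Fin n → ℝ) : ℝ :=
  alternant m u / vprod u / principalSpec q m

variable {q : ℝ} {n : ℕ}

lemma principalSpec_eq_vprod_div (m : Fin n → ℕ) :
    principalSpec q m = vprod (fun i => q ^ m i) / vprod fun i : Fin n => q ^ (i : ℕ) := by
  rw [principalSpec, alternant_pow_eq_det_vandermonde, vprod_eq_det_vandermonde fun i => q ^ m i]

lemma vprod_pow_ne_zero (hq0 : 0 < q) (hq1 : q < 1) {m : Fin n → ℕ}
    (hm : Function.Injective m) : vprod (fun i => q ^ m i) ≠ 0 := by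
  rw [vprod_eq_det_vandermonde, Matrix.det_vandermonde_ne_zero_iff]
  exact (pow_right_strictAnti₀ hq0 hq1).injective.comp hm

lemma principalSpec_ne_zero (hq0 : 0 < q) (hq1 : q < 1) {m : Fin n → ℕ}
    (hm : Function.Injective m) : principalSpec q m ≠ 0 := by
  rw [principalSpec_eq_vprod_div]
  exact div_ne_zero (vprod_pow_ne_zero hq0 hq1 hm) (vprod_pow_ne_zero hq0 hq1 Fin.val_injective)

lemma principalSpec_val (hq0 : 0 < q) (hq1 : q < 1) :
    principalSpec q (Fin.val : Fin n → ℕ) = 1 := by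
  rw [principalSpec_eq_vprod_div]
  exact div_self (vprod_pow_ne_zero hq0 hq1 Fin.val_injective)

lemma normSchur_val (hq0 : 0 < q) (hq1 : q < 1) {u : Fin n → ℝ} (hu : StrictMono u) :
    normSchur q Fin.val u = 1 := by
  rw [normSchur, principalSpec_val hq0 hq1, div_one, ← vprod_eq_alternant,
    div_self (vprod_pos hu).ne']

lemma qpochR_pos (hq0 : 0 < q) (hq1 : q < 1) : 0 < qpochR q q n :=
  Finset.prod_pos fun i _ => by
    rw [← pow_succ']
    exact sub_pos.2 (pow_lt_one₀ hq0.le hq1 i.succ_ne_zero)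

lemma vprod_pow_shiftExp (m : Fin n → ℕ) :
    vprod (fun i => q ^ shiftExp m i) = (-1) ^ n * (∏ i, (1 - q ^ (m i + 1))) *
      q ^ (Finset.univ.filter fun p : Fin n × Fin n => p.1 < p.2).card *
        vprod fun i => q ^ m i := by
  have as_cons : (fun i => q ^ shiftExp m i) = Fin.cons 1 fun i => q * q ^ m i := by
    ext i
    cases i using Fin.cases <;> simp [shiftExp, pow_succ']
  have flip_sign : ∏ i, (q * q ^ m i - 1) = (-1) ^ n * ∏ i, (1 - q ^ (m i + 1)) := by
    simpa [pow_succ'] using Finset.prod_neg (s := Finset.univ) fun i => 1 - q * q ^ m i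
  rw [as_cons, vprod_cons, vprod_const_mul, flip_sign, mul_assoc _ (q ^ _)]

lemma qpochR_mul_principalSpec_shiftExp (hq0 : 0 < q) (hq1 : q < 1) (m : Fin n → ℕ) :
    qpochR q q n * principalSpec q (shiftExp m) =
      (∏ i, (1 - q ^ (m i + 1))) * principalSpec q m := by
  have hpoch : qpochR q q n = ∏ i : Fin n, (1 - q ^ ((i : ℕ) + 1)) := by
    simp only [qpochR, Finset.prod_range, pow_succ']
  have hval : (fun i : Fin (n + 1) => q ^ (i : ℕ)) = fun i => q ^ shiftExp Fin.val i := by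
    rw [shiftExp_val]
  have hne := (qpochR_pos (n := n) hq0 hq1).ne'
  have hvne := vprod_pow_ne_zero hq0 hq1 (Fin.val_injective (n := n))
  rw [principalSpec_eq_vprod_div, principalSpec_eq_vprod_div, hval, vprod_pow_shiftExp,
    vprod_pow_shiftExp, ← hpoch]
  field_simp

end PrincipalSpecialization

section Partition

lemma prod_sub_eq_alternant_rev {n : ℕ} (u : Fin n → ℝ) :
    ∏ p ∈ Finset.univ.filter (fun p : Fin n × Fin n => p.1 < p.2), (u p.1 - u p.2) =
      alternant (Fin.val ∘ Fin.rev) u := by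
  have h := Matrix.det_projVandermonde (fun _ => 1) u
  simp only [one_mul] at h
  rw [alternant, ← Matrix.det_transpose, Finset.prod_filter, Fintype.prod_prod_type]
  refine (Finset.prod_congr rfl fun i _ => ?_).trans (h.symm.trans ?_)
  · rw [← Finset.prod_filter, ← Finset.filter_lt_eq_Ioi]
  · congr 1
    ext i j
    simp [Matrix.projVandermonde_apply]

lemma schurL_eq_alternant_div {n : ℕ} {l : Fin n → ℤ} {m : Fin n → ℕ}
    (h : ∀ i, l i + n - 1 - (i : ℕ) = m i.rev) (u : Fin n → ℝ) :
    schurL n l u = alternant m u / vprod u := by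
  have numerator : (Matrix.of fun i j : Fin n => u j ^ (l i + (n : ℤ) - 1 - (i : ℕ))).det =
      alternant (m ∘ Fin.revPerm) u := by
    simp only [h, zpow_natCast]
    rfl
  rw [schurL, numerator, prod_sub_eq_alternant_rev, vprod_eq_alternant]
  change _ / alternant (Fin.val ∘ Fin.revPerm) u = _
  rw [alternant_comp_perm, alternant_comp_perm, mul_div_mul_left]
  exact_mod_cast (Equiv.Perm.sign Fin.revPerm).ne_zero

lemma schurTilde_eq_normSchur {n : ℕ} {l : Fin n → ℤ} {m : Fin n → ℕ}
    (h : ∀ i, l i + n - 1 - (i : ℕ) = m i.rev) (q : ℝ) (u : Fin n → ℝ) :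
    schurTilde q n l u = normSchur q m u := by
  rw [schurTilde, schurL_eq_alternant_div h, schurL_eq_alternant_div h]
  rfl

/-- The partition with increasing exponents `m`, i.e. `ν_i = m_{K-1-i} - (K-1-i)`. -/
def partOfExp {K : ℕ} (m : Fin K → ℕ) : Fin K → ℤ :=
  fun i => (m i.rev : ℤ) - (i.rev : ℕ)

/-- The exponents of a partition after appending `d` zero parts:
`(0, …, d - 1, m_0 + d, …, m_{K-1} + d)`. -/
def padExp {K : ℕ} (d : ℕ) (m : Fin K → ℕ) : Fin (K + d) → ℕ :=
  fun j => if h : (j : ℕ) < d then j else m ⟨j - d, by omega⟩ + d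

lemma padExp_zero {K : ℕ} (m : Fin K → ℕ) : padExp 0 m = m := by
  ext j
  simp [padExp]

lemma padExp_succ {K : ℕ} (d : ℕ) (m : Fin K → ℕ) :
    padExp (d + 1) m = shiftExp (padExp d m) := by
  ext j
  change Fin (K + d + 1) at j
  cases j using Fin.cases with
  | zero => simp [padExp, shiftExp]
  | succ j =>
    simp only [padExp, shiftExp, Fin.cons_succ, Fin.val_succ, Nat.add_sub_add_right,
      Nat.add_lt_add_iff_right]
    split_ifs <;> rfl

variable {K : ℕ} {m : Fin K → ℕ}

lemma monotone_sub_val_of_strictMono (hm : StrictMono m) :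
    Monotone fun i : Fin K => (m i : ℤ) - (i : ℕ) := by
  cases K with
  | zero => exact fun i => i.elim0
  | succ n =>
    refine Fin.monotone_iff_le_succ.2 fun i => ?_
    have := hm i.castSucc_lt_succ
    simp only [Fin.val_castSucc, Fin.val_succ]
    omega

lemma antitone_partOfExp (hm : StrictMono m) : Antitone (partOfExp m) :=
  fun _ _ hij => monotone_sub_val_of_strictMono hm (Fin.rev_le_rev.2 hij)

lemma partOfExp_nonneg (hm : StrictMono m) (i : Fin K) : 0 ≤ partOfExp m i := by
  have : NeZero K := ⟨by rintro rfl; exact i.elim0⟩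
  refine le_trans ?_ (monotone_sub_val_of_strictMono hm (Fin.zero_le i.rev))
  simp

lemma schurTilde_partOfExp (q : ℝ) (m : Fin K → ℕ) (u : Fin K → ℝ) :
    schurTilde q K (partOfExp m) u = normSchur q m u := by
  refine schurTilde_eq_normSchur (fun i => ?_) q u
  simp only [partOfExp, Fin.val_rev]
  omega

lemma schurTilde_padSig_partOfExp (q : ℝ) (d : ℕ) (m : Fin K → ℕ) (u : Fin (K + d) → ℝ) :
    schurTilde q (K + d) (padSig K (K + d) (partOfExp m)) u = normSchur q (padExp d m) u := by
  refine schurTilde_eq_normSchur (fun i => ?_) q u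
  have hi := i.isLt
  by_cases h : (i : ℕ) < K
  · have hrev : ¬ (i.rev : ℕ) < d := by rw [Fin.val_rev]; omega
    have hidx : (⟨i.rev - d, by omega⟩ : Fin K) = Fin.rev ⟨i, h⟩ :=
      Fin.ext (by simp only [Fin.val_rev]; omega)
    rw [padSig, dif_pos h, padExp, dif_neg hrev, hidx, partOfExp, Fin.val_rev ⟨i, h⟩]
    push_cast
    omega
  · have hrev : (i.rev : ℕ) < d := by rw [Fin.val_rev]; omega
    rw [padSig, dif_neg h, padExp, dif_pos hrev, Fin.val_rev]
    omega

end Partition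

section ProductSums

variable {α : Type*}

lemma hasSum_prod_pi {n : ℕ} {f : Fin n → α → ℝ} {s : Fin n → ℝ}
    (h : ∀ i, HasSum (f i) (s i)) : HasSum (fun y : Fin n → α => ∏ i, f i (y i)) (∏ i, s i) := by
  induction n with
  | zero => simp
  | succ n ih =>
    have tail := ih fun i => h i.succ
    have hmul := summable_mul_of_summable_norm (h 0).summable.norm tail.summable.norm
    rw [← (Fin.consEquiv fun _ => α).hasSum_iff, Fin.prod_univ_succ]
    refine ((h 0).mul tail hmul).congr_fun fun y => ?_
    simp [Fin.consEquiv, Fin.prod_univ_succ]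

lemma hasSum_prod_mul_det {n : ℕ} {w : Fin n → α → ℝ} {f : Fin n → α → ℝ}
    {s : Matrix (Fin n) (Fin n) ℝ} (h : ∀ i j, HasSum (fun y => w j y * f i y) (s i j)) :
    HasSum (fun y : Fin n → α => (∏ j, w j (y j)) * (Matrix.of fun i j => f i (y j)).det)
      s.det := by
  have := hasSum_sum (s := Finset.univ) fun σ (_ : σ ∈ Finset.univ) =>
    (hasSum_prod_pi fun j => h (σ j) j).mul_left ((Equiv.Perm.sign σ : ℤ) : ℝ)
  simpa only [Matrix.det_apply', Matrix.of_apply, Finset.mul_sum, Finset.prod_mul_distrib,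
    mul_left_comm] using this

end ProductSums

section Lattice

variable {q zm zp : ℝ}

lemma ne_zero_of_mem_Lambda (hq0 : 0 < q) (hzm : zm < 0) (hzp : 0 < zp) {x : ℝ}
    (hx : x ∈ Lambda q zm zp) : x ≠ 0 := by
  rcases hx with ⟨m, rfl⟩ | ⟨m, rfl⟩
  · exact mul_ne_zero hzm.ne (zpow_pos hq0 m).ne'
  · exact mul_ne_zero hzp.ne' (zpow_pos hq0 m).ne'

lemma mul_zpow_mem_Lambda (hq0 : 0 < q) {x : ℝ} (hx : x ∈ Lambda q zm zp) (k : ℤ) :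
    x * q ^ k ∈ Lambda q zm zp := by
  rcases hx with ⟨m, rfl⟩ | ⟨m, rfl⟩
  · exact Or.inl ⟨m + k, by rw [zpow_add₀ hq0.ne', mul_assoc]⟩
  · exact Or.inr ⟨m + k, by rw [zpow_add₀ hq0.ne', mul_assoc]⟩

lemma exists_eq_mul_zpow_of_mem_Lambda (hq0 : 0 < q) (hzm : zm < 0) (hzp : 0 < zp) {x y : ℝ}
    (hx : x ∈ Lambda q zm zp) (hy : y ∈ Lambda q zm zp) (hxy : 0 < x * y) :
    ∃ k : ℤ, y = x * q ^ k := by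
  have shift (z : ℝ) (m k : ℤ) : z * q ^ k = z * q ^ m * q ^ (k - m) := by
    rw [mul_assoc, ← zpow_add₀ hq0.ne', add_sub_cancel]
  rcases hx with ⟨m, rfl⟩ | ⟨m, rfl⟩ <;> rcases hy with ⟨k, rfl⟩ | ⟨k, rfl⟩
  · exact ⟨k - m, shift _ _ _⟩
  · exact absurd hxy (mul_neg_of_neg_of_pos (mul_neg_of_neg_of_pos hzm (zpow_pos hq0 m))
      (mul_pos hzp (zpow_pos hq0 k))).not_gt
  · exact absurd hxy (mul_neg_of_pos_of_neg (mul_pos hzp (zpow_pos hq0 m))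
      (mul_neg_of_neg_of_pos hzm (zpow_pos hq0 k))).not_gt
  · exact ⟨k - m, shift _ _ _⟩

lemma abs_mul_one_sub_le_abs_sub (hq0 : 0 < q) (hq1 : q < 1) (hzm : zm < 0) (hzp : 0 < zp)
    {x y : ℝ} (hx : x ∈ Lambda q zm zp) (hy : y ∈ Lambda q zm zp) (hne : y ≠ x) :
    |x| * (1 - q) ≤ |y - x| := by
  have hx0 := ne_zero_of_mem_Lambda hq0 hzm hzp hx
  rcases (mul_ne_zero hx0 (ne_zero_of_mem_Lambda hq0 hzm hzp hy)).lt_or_gt with hxy | hxy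
  · calc |x| * (1 - q) ≤ |x| := mul_le_of_le_one_right (abs_nonneg x) (by linarith)
      _ ≤ |y - x| := sq_le_sq.1 (by nlinarith)
  · obtain ⟨k, rfl⟩ := exists_eq_mul_zpow_of_mem_Lambda hq0 hzm hzp hx hy hxy
    have hk : k ≠ 0 := by rintro rfl; simp at hne
    suffices 1 - q ≤ |q ^ k - 1| by
      rw [← mul_sub_one, abs_mul]
      exact mul_le_mul_of_nonneg_left this (abs_nonneg x)
    rcases hk.lt_or_gt with hk | hk
    · have : q⁻¹ ≤ q ^ k := by
        simpa using zpow_le_zpow_right_of_le_one₀ hq0 hq1.le (by omega : k ≤ -1)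
      have : 2 - q ≤ q⁻¹ := by
        rw [← one_div, le_div_iff₀ hq0]
        nlinarith [sq_nonneg (q - 1)]
      exact le_trans (by linarith) (le_abs_self _)
    · have : q ^ k ≤ q := by
        simpa using zpow_le_zpow_right_of_le_one₀ hq0 hq1.le (by omega : 1 ≤ k)
      rw [abs_sub_comm]
      exact le_trans (by linarith) (le_abs_self _)

end Lattice

section JacksonIntegral

/-- The support `{x, xq, xq², …}` of Jackson's `q`-integral from `0` to `x`. -/
def qRay (q x : ℝ) : Set ℝ :=
  Set.range fun k : ℕ => x * q ^ k

variable {q zm zp : ℝ}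

lemma hasSum_indicator_qRay_pow (hq0 : 0 < q) (hq1 : q < 1) {x : ℝ} (hx : x ≠ 0) (l : ℕ) :
    HasSum ((qRay q x).indicator fun y => y ^ (l + 1)) (x ^ (l + 1) / (1 - q ^ (l + 1))) := by
  have hinj : Function.Injective fun k : ℕ => x * q ^ k :=
    (mul_right_injective₀ hx).comp (pow_right_strictAnti₀ hq0 hq1).injective
  rw [← hasSum_subtype_iff_indicator]
  refine (hinj.hasSum_range_iff (f := fun y : ℝ => y ^ (l + 1))).2 ?_
  have := (hasSum_geometric_of_lt_one (pow_nonneg hq0.le (l + 1))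
    (pow_lt_one₀ hq0.le hq1 l.succ_ne_zero)).mul_left (x ^ (l + 1))
  simpa only [Function.comp_def, mul_pow, pow_right_comm q, div_eq_mul_inv] using this

lemma mem_qRay_iff (hq0 : 0 < q) (hq1 : q < 1) (hzm : zm < 0) (hzp : 0 < zp) {x y : ℝ}
    (hx : x ∈ Lambda q zm zp) :
    y ∈ qRay q x ↔ y ∈ Lambda q zm zp ∧ 0 < x * y ∧ |y| ≤ |x| := by
  have hx0 := ne_zero_of_mem_Lambda hq0 hzm hzp hx
  constructor
  · rintro ⟨k, rfl⟩
    refine ⟨by simpa using mul_zpow_mem_Lambda hq0 hx k, ?_, ?_⟩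
    · rw [← mul_assoc]
      exact mul_pos (mul_self_pos.2 hx0) (pow_pos hq0 k)
    · rw [abs_mul, abs_of_pos (pow_pos hq0 k)]
      exact mul_le_of_le_one_right (abs_nonneg x) (pow_le_one₀ hq0.le hq1.le)
  · rintro ⟨hy, hxy, hle⟩
    obtain ⟨k, rfl⟩ := exists_eq_mul_zpow_of_mem_Lambda hq0 hzm hzp hx hy hxy
    have hqk : q ^ k ≤ 1 := by
      rwa [abs_mul, abs_of_pos (zpow_pos hq0 k), mul_le_iff_le_one_right (abs_pos.2 hx0)] at hle
    have hk : 0 ≤ k := le_of_not_gt fun hk => hqk.not_gt (one_lt_zpow_of_neg₀ hq0 hq1 hk)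
    lift k to ℕ using hk
    exact ⟨k, by simp⟩

-- Jackson's `∫_a^b = ∫_0^b - ∫_0^a`: points of `qRay q x` have the sign of `x`.
lemma indicator_qInterval_abs (hq0 : 0 < q) (hq1 : q < 1) (hzm : zm < 0) (hzp : 0 < zp)
    {a b : ℝ} (ha : a ∈ Lambda q zm zp) (hb : b ∈ Lambda q zm zp) (hab : a < b) (y : ℝ) :
    (qInterval q zm zp a b).indicator (fun y => |y|) y =
      (qRay q b).indicator id y - (qRay q a).indicator id y := by
  have ha0 := ne_zero_of_mem_Lambda hq0 hzm hzp ha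
  have hb0 := ne_zero_of_mem_Lambda hq0 hzm hzp hb
  by_cases hy : y ∈ Lambda q zm zp
  · have hy0 := ne_zero_of_mem_Lambda hq0 hzm hzp hy
    simp only [Set.indicator_apply, mem_qRay_iff hq0 hq1 hzm hzp ha,
      mem_qRay_iff hq0 hq1 hzm hzp hb, mul_pos_iff, qInterval, id, hy, true_and]
    grind
  · have hmem : y ∉ qInterval q zm zp a b := by
      unfold qInterval
      split_ifs <;> exact fun h => hy h.2
    simp [hmem, mem_qRay_iff hq0 hq1 hzm hzp, ha, hb, hy]

lemma hasSum_indicator_qInterval_mul_pow (hq0 : 0 < q) (hq1 : q < 1) (hzm : zm < 0)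
    (hzp : 0 < zp) {a b : ℝ} (ha : a ∈ Lambda q zm zp) (hb : b ∈ Lambda q zm zp) (hab : a < b)
    (l : ℕ) :
    HasSum (fun y => (qInterval q zm zp a b).indicator (fun y => |y|) y * y ^ l)
      ((b ^ (l + 1) - a ^ (l + 1)) / (1 - q ^ (l + 1))) := by
  have ray {x : ℝ} (hx : x ∈ Lambda q zm zp) :=
    hasSum_indicator_qRay_pow hq0 hq1 (ne_zero_of_mem_Lambda hq0 hzm hzp hx) l
  rw [sub_div]
  refine ((ray hb).sub (ray ha)).congr_fun fun y => ?_
  rw [indicator_qInterval_abs hq0 hq1 hzm hzp ha hb hab, sub_mul]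
  simp only [pow_succ', Set.indicator_apply, ite_mul, zero_mul, id]

lemma qInterval_subset (a b : ℝ) :
    qInterval q zm zp a b ⊆ Set.Icc a b ∩ Lambda q zm zp := by
  unfold qInterval
  split_ifs
  · exact Set.inter_subset_inter_left _ Set.Ico_subset_Icc_self
  · rfl
  · exact Set.inter_subset_inter_left _ Set.Ioc_subset_Icc_self

lemma lt_of_mem_qInterval_of_mem_qInterval {a b c y z : ℝ} (hy : y ∈ qInterval q zm zp a b)
    (hz : z ∈ qInterval q zm zp b c) (hbc : b < c) : y < z := by
  rcases lt_or_ge b 0 with hb | hb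
  · have hyb : y < b := by
      rw [qInterval, if_pos hb] at hy
      exact hy.1.2
    exact hyb.trans_le (qInterval_subset b c hz).1.1
  · have hbz : b < z := by
      rw [qInterval, if_neg (hb.trans hbc.le).not_gt, if_neg hb.not_gt] at hz
      exact hz.1.1
    exact (qInterval_subset a b hy).1.2.trans_lt hbz

end JacksonIntegral

section TameKernel

lemma abs_mul_le_mul_of_ne_zero {w f B : ℝ} (hw : 0 ≤ w) (hf : w ≠ 0 → |f| ≤ B) :
    |w * f| ≤ w * B := by
  rw [abs_mul, abs_of_nonneg hw]
  rcases eq_or_ne w 0 with h | h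
  · simp [h]
  · exact mul_le_mul_of_nonneg_left (hf h) hw

lemma summable_mul_of_abs_le {ι : Type*} {w f : ι → ℝ} {B : ℝ} (hw0 : ∀ i, 0 ≤ w i)
    (hw : Summable w) (hf : ∀ i, w i ≠ 0 → |f i| ≤ B) : Summable fun i => w i * f i :=
  Summable.of_norm_bounded (hw.mul_right B) fun i => abs_mul_le_mul_of_ne_zero (hw0 i) (hf i)

variable {α β γ : Type*} [Norm α] [Norm β] [Norm γ]

/-- A function which is bounded on every ball; these are the functions tame kernels act on. -/
def IsBoundedOnBalls (f : α → ℝ) : Prop :=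
  ∀ A, ∃ B, ∀ x, ‖x‖ ≤ A → |f x| ≤ B

/-- A nonnegative kernel which does not increase the norm and whose total masses form a function
bounded on balls: the class of kernels within which compositions and expectations commute. -/
structure IsTameKernel (k : α → β → ℝ) : Prop where
  nonneg : ∀ x y, 0 ≤ k x y
  norm_le : ∀ {x y}, k x y ≠ 0 → ‖y‖ ≤ ‖x‖
  summable : ∀ x, Summable (k x)
  bounded_tsum : IsBoundedOnBalls fun x => ∑' y, k x y

/-- The composition of two kernels, that is, their product as infinite matrices. -/
def kernelComp (k : α → β → ℝ) (l : β → γ → ℝ) (x : α) (z : γ) : ℝ :=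
  ∑' y, k x y * l y z

lemma isTameKernel_one : IsTameKernel fun x y : α => if x = y then (1 : ℝ) else 0 where
  nonneg x y := by split_ifs <;> norm_num
  norm_le {x y} h := by
    obtain rfl : x = y := by simpa using h
    rfl
  summable x := (hasSum_ite_eq x (1 : ℝ)).summable.congr fun y => by simp only [eq_comm]
  bounded_tsum A := ⟨1, fun x _ => by simp⟩

namespace IsTameKernel

variable {k : α → β → ℝ} {l : β → γ → ℝ}

lemma summable_mul (hk : IsTameKernel k) {f : β → ℝ} (hf : IsBoundedOnBalls f) (x : α) :
    Summable fun y => k x y * f y := by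
  obtain ⟨B, hB⟩ := hf ‖x‖
  exact summable_mul_of_abs_le (hk.nonneg x) (hk.summable x) fun y h => hB y (hk.norm_le h)

lemma isBoundedOnBalls_tsum_mul (hk : IsTameKernel k) {f : β → ℝ} (hf : IsBoundedOnBalls f) :
    IsBoundedOnBalls fun x => ∑' y, k x y * f y := by
  intro A
  obtain ⟨B, hB⟩ := hf A
  obtain ⟨C, hC⟩ := hk.bounded_tsum A
  refine ⟨C * |B|, fun x hx => ?_⟩
  calc |∑' y, k x y * f y| ≤ (∑' y, k x y) * |B| :=
        tsum_of_norm_bounded (f := fun y => k x y * f y)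
          ((hk.summable x).hasSum.mul_right |B|) fun y =>
          abs_mul_le_mul_of_ne_zero (hk.nonneg x y) fun h =>
            (hB y ((hk.norm_le h).trans hx)).trans (le_abs_self B)
    _ ≤ C * |B| := mul_le_mul_of_nonneg_right ((le_abs_self _).trans (hC x hx)) (abs_nonneg B)

lemma nonneg_mul (hk : IsTameKernel k) (hl : IsTameKernel l) (x : α) (y : β) (z : γ) :
    0 ≤ k x y * l y z :=
  mul_nonneg (hk.nonneg x y) (hl.nonneg y z)

lemma summable_prod (hk : IsTameKernel k) (hl : IsTameKernel l) (x : α) :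
    Summable fun p : β × γ => k x p.1 * l p.1 p.2 := by
  have nonneg : 0 ≤ fun p : β × γ => k x p.1 * l p.1 p.2 := fun p => hk.nonneg_mul hl x p.1 p.2
  have columns : Summable fun y => ∑' z, k x y * l y z := by
    simpa only [tsum_mul_left] using hk.summable_mul hl.bounded_tsum x
  refine (summable_prod_of_nonneg nonneg).2 ⟨fun y => ?_, columns⟩
  exact (hl.summable y).mul_left (k x y)

lemma norm_le_of_comp_ne_zero (hk : IsTameKernel k) (hl : IsTameKernel l) {x : α} {z : γ}
    (h : kernelComp k l x z ≠ 0) : ‖z‖ ≤ ‖x‖ := by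
  obtain ⟨y, hy⟩ : ∃ y, k x y * l y z ≠ 0 := by
    by_contra! hzero
    exact h (by simp [kernelComp, hzero])
  exact (hl.norm_le (right_ne_zero_of_mul hy)).trans (hk.norm_le (left_ne_zero_of_mul hy))

lemma tsum_comp (hk : IsTameKernel k) (hl : IsTameKernel l) (x : α) :
    ∑' z, kernelComp k l x z = ∑' y, k x y * ∑' z, l y z := by
  simp only [← tsum_mul_left]
  exact (hk.summable_prod hl x).tsum_comm

lemma comp (hk : IsTameKernel k) (hl : IsTameKernel l) : IsTameKernel (kernelComp k l) where
  nonneg x z := tsum_nonneg fun y => hk.nonneg_mul hl x y z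
  norm_le := hk.norm_le_of_comp_ne_zero hl
  summable x := (hk.summable_prod hl x).prod_symm.prod
  bounded_tsum := by
    simpa only [hk.tsum_comp hl] using hk.isBoundedOnBalls_tsum_mul hl.bounded_tsum

lemma hasSum_comp_mul (hk : IsTameKernel k) (hl : IsTameKernel l) {f : γ → ℝ} {g : β → ℝ}
    (hf : IsBoundedOnBalls f) (hg : ∀ y, HasSum (fun z => l y z * f z) (g y)) {x : α} {c : ℝ}
    (hc : HasSum (fun y => k x y * g y) c) :
    HasSum (fun z => kernelComp k l x z * f z) c := by
  obtain ⟨B, hB⟩ := hf ‖x‖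
  have hsum : Summable fun p : β × γ => k x p.1 * l p.1 p.2 * f p.2 :=
    summable_mul_of_abs_le (fun p => hk.nonneg_mul hl x p.1 p.2) (hk.summable_prod hl x)
      fun p hp => hB _ <| (hl.norm_le (right_ne_zero_of_mul hp)).trans
        (hk.norm_le (left_ne_zero_of_mul hp))
  have by_rows : HasSum (fun y => k x y * g y) (∑' p : β × γ, k x p.1 * l p.1 p.2 * f p.2) :=
    hsum.hasSum.prod_fiberwise fun y => by simpa only [mul_assoc] using (hg y).mul_left (k x y)
  have by_columns := hsum.prod_symm.hasSum.prod_fiberwise fun z =>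
    ((hsum.prod_symm.prod_factor z).hasSum)
  rw [hc.unique by_rows, ← (Equiv.prodComm γ β).tsum_eq]
  refine by_columns.congr_fun fun z => ?_
  exact tsum_mul_right.symm

end IsTameKernel

end TameKernel

section Links

variable {q zm zp : ℝ}

/-- Configurations are measured by the distance from the origin of their farthest point. -/
instance {N : ℕ} : Norm (Conf q zm zp N) :=
  ⟨fun X => ‖X.1‖⟩

/-- The one-step `q`-link conjugated by the Vandermonde products of the two configurations. -/
def interlacingKernel (q zm zp : ℝ) (N : ℕ) (X : Conf q zm zp (N + 1)) (Y : Conf q zm zp N) : ℝ :=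
  if Interlaces q zm zp Y X then (∏ i, |Y.1 i|) * qpochR q q N else 0

lemma qlink_eq_interlacingKernel {N : ℕ} (X : Conf q zm zp (N + 1)) (Y : Conf q zm zp N) :
    qlink q zm zp N X Y = interlacingKernel q zm zp N X Y * (vprod Y.1 / vprod X.1) := by
  rw [qlink, interlacingKernel, ite_mul, zero_mul, mul_div_assoc]

variable {N : ℕ}

lemma interlacingKernel_eq_prod_indicator (X : Conf q zm zp (N + 1)) (Y : Conf q zm zp N) :
    interlacingKernel q zm zp N X Y = qpochR q q N * ∏ i : Fin N,
      (qInterval q zm zp (X.1 i.castSucc) (X.1 i.succ)).indicator (fun y => |y|) (Y.1 i) := by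
  simp only [interlacingKernel, Interlaces, Set.indicator_apply, Finset.prod_ite_zero,
    Finset.mem_univ, true_imp_iff, mul_ite, mul_zero, mul_comm]

lemma strictMono_of_forall_mem_qInterval {x : Fin (N + 1) → ℝ} (hx : StrictMono x)
    {y : Fin N → ℝ} (hy : ∀ i : Fin N, y i ∈ qInterval q zm zp (x i.castSucc) (x i.succ)) :
    StrictMono y := by
  cases N with
  | zero => exact fun i => i.elim0
  | succ n =>
    exact Fin.strictMono_iff_lt_succ.2 fun i => lt_of_mem_qInterval_of_mem_qInterval
      (hy i.castSucc) (hy i.succ) (hx i.succ.castSucc_lt_succ)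

-- Points interlacing with `X` form a configuration, so sums over `Conf` are product sums.
lemma hasSum_interlacingKernel_mul (X : Conf q zm zp (N + 1)) {F : (Fin N → ℝ) → ℝ} {s : ℝ}
    (h : HasSum (fun y : Fin N → ℝ => (∏ i : Fin N, (qInterval q zm zp (X.1 i.castSucc)
      (X.1 i.succ)).indicator (fun y => |y|) (y i)) * F y) s) :
    HasSum (fun Y => interlacingKernel q zm zp N X Y * F Y.1) (qpochR q q N * s) := by
  have support (y : Fin N → ℝ) (hy : y ∉ Set.range (Subtype.val : Conf q zm zp N → _)) :
      (∏ i : Fin N, (qInterval q zm zp (X.1 i.castSucc) (X.1 i.succ)).indicator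
        (fun y => |y|) (y i)) * F y = 0 := by
    by_contra hne
    have hmem (i : Fin N) : y i ∈ qInterval q zm zp (X.1 i.castSucc) (X.1 i.succ) :=
      Set.mem_of_indicator_ne_zero
        (Finset.prod_ne_zero_iff.1 (left_ne_zero_of_mul hne) i (Finset.mem_univ i))
    exact hy ⟨⟨y, strictMono_of_forall_mem_qInterval X.2.1 hmem,
      fun i => (qInterval_subset _ _ (hmem i)).2⟩, rfl⟩
  refine (((Subtype.val_injective.hasSum_iff support).2 h).mul_left _).congr_fun ?_
  intro (Y : Conf q zm zp N)
  exact (congrArg (· * F Y.1) (interlacingKernel_eq_prod_indicator X Y)).trans (mul_assoc _ _ _)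

lemma interlacingKernel_nonneg (hq0 : 0 < q) (hq1 : q < 1) (X : Conf q zm zp (N + 1))
    (Y : Conf q zm zp N) : 0 ≤ interlacingKernel q zm zp N X Y := by
  unfold interlacingKernel
  split_ifs
  · exact mul_nonneg (Finset.prod_nonneg fun _ _ => abs_nonneg _) (qpochR_pos hq0 hq1).le
  · rfl

lemma norm_le_of_interlaces {X : Conf q zm zp (N + 1)} {Y : Conf q zm zp N}
    (h : Interlaces q zm zp Y X) : ‖Y‖ ≤ ‖X‖ := by
  refine (pi_norm_le_iff_of_nonneg (norm_nonneg X.1)).2 fun i => ?_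
  have hi := (qInterval_subset _ _ (h i)).1
  exact (abs_le_max_abs_abs hi.1 hi.2).trans
    (max_le (norm_le_pi_norm X.1 i.castSucc) (norm_le_pi_norm X.1 i.succ))

variable (hq0 : 0 < q) (hq1 : q < 1) (hzm : zm < 0) (hzp : 0 < zp)
include hq0 hq1 hzm hzp

lemma hasSum_interlacingKernel (X : Conf q zm zp (N + 1)) :
    HasSum (interlacingKernel q zm zp N X)
      (qpochR q q N * ∏ i : Fin N, (X.1 i.succ - X.1 i.castSucc) / (1 - q)) := by
  have := hasSum_interlacingKernel_mul X (F := fun _ => 1) (by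
    simpa using hasSum_prod_pi fun i : Fin N => hasSum_indicator_qInterval_mul_pow hq0 hq1 hzm hzp
      (X.2.2 i.castSucc) (X.2.2 i.succ) (X.2.1 i.castSucc_lt_succ) 0)
  simpa using this

lemma isTameKernel_interlacingKernel : IsTameKernel (interlacingKernel q zm zp N) where
  nonneg := interlacingKernel_nonneg hq0 hq1
  norm_le h := norm_le_of_interlaces (of_not_not fun hI => h (if_neg hI))
  summable X := (hasSum_interlacingKernel hq0 hq1 hzm hzp X).summable
  bounded_tsum A := by
    refine ⟨qpochR q q N * ∏ _i : Fin N, (A + A) / (1 - q), fun X hX => ?_⟩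
    beta_reduce
    rw [(hasSum_interlacingKernel hq0 hq1 hzm hzp X).tsum_eq, abs_mul,
      abs_of_pos (qpochR_pos hq0 hq1), Finset.abs_prod]
    refine mul_le_mul_of_nonneg_left ?_ (qpochR_pos hq0 hq1).le
    refine Finset.prod_le_prod (fun _ _ => abs_nonneg _) fun i _ => ?_
    have hA (j : Fin (N + 1)) : |X.1 j| ≤ A := (norm_le_pi_norm X.1 j).trans hX
    rw [abs_div, abs_of_pos (sub_pos.2 hq1)]
    exact div_le_div_of_nonneg_right ((abs_sub _ _).trans (add_le_add (hA _) (hA _)))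
      (sub_pos.2 hq1).le

lemma hasSum_interlacingKernel_mul_alternant (m : Fin N → ℕ) (X : Conf q zm zp (N + 1)) :
    HasSum (fun Y => interlacingKernel q zm zp N X Y * alternant m Y.1)
      (qpochR q q N * (alternant (shiftExp m) X.1 / ∏ i, (1 - q ^ (m i + 1)))) := by
  have h := hasSum_interlacingKernel_mul X <| hasSum_prod_mul_det fun i j : Fin N =>
    hasSum_indicator_qInterval_mul_pow hq0 hq1 hzm hzp
      (X.2.2 j.castSucc) (X.2.2 j.succ) (X.2.1 j.castSucc_lt_succ) (m i)
  convert h using 2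
  · rfl
  · rw [alternant_shiftExp, div_eq_inv_mul, ← Finset.prod_inv_distrib, ← Matrix.det_mul_column]
    simp only [Matrix.of_apply, div_eq_inv_mul]
    rfl

lemma hasSum_interlacingKernel_mul_alternant_div (m : Fin N → ℕ) (X : Conf q zm zp (N + 1)) :
    HasSum (fun Y => interlacingKernel q zm zp N X Y * (alternant m Y.1 / principalSpec q m))
      (alternant (shiftExp m) X.1 / principalSpec q (shiftExp m)) := by
  have hne := (qpochR_pos (n := N) hq0 hq1).ne'
  have h := (hasSum_interlacingKernel_mul_alternant hq0 hq1 hzm hzp m X).div_const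
    (principalSpec q m)
  simp only [mul_div_assoc, div_div, ← qpochR_mul_principalSpec_shiftExp hq0 hq1] at h
  rwa [← mul_div_assoc, mul_div_mul_left _ _ hne] at h

end Links

section IteratedLinks

/-- The multi-step link `Λ^{K+d}_K` conjugated by Vandermonde products. -/
def interlacingKernelIter (q zm zp : ℝ) (K : ℕ) :
    (d : ℕ) → Conf q zm zp (K + d) → Conf q zm zp K → ℝ
  | 0 => fun X Y => if X = Y then 1 else 0
  | d + 1 => kernelComp (interlacingKernel q zm zp (K + d)) (interlacingKernelIter q zm zp K d)

variable {q zm zp : ℝ} {K : ℕ}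

lemma linkPow_eq_interlacingKernelIter (d : ℕ) (X : Conf q zm zp (K + d)) (Y : Conf q zm zp K) :
    linkPow q zm zp K d X Y = interlacingKernelIter q zm zp K d X Y * (vprod Y.1 / vprod X.1) := by
  induction d with
  | zero =>
    simp only [linkPow, interlacingKernelIter]
    split_ifs with h
    · rw [h, div_self (vprod_pos Y.2.1).ne', mul_one]
    · rw [zero_mul]
  | succ d ih =>
    simp only [linkPow, interlacingKernelIter, kernelComp]
    rw [← tsum_mul_right]
    refine tsum_congr fun Z => ?_
    have hZ := (vprod_pos Z.2.1).ne'
    rw [ih, qlink_eq_interlacingKernel]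
    field_simp

lemma isBoundedOnBalls_alternant (m : Fin K → ℕ) (c : ℝ) :
    IsBoundedOnBalls fun Y : Conf q zm zp K => alternant m Y.1 / c := by
  intro A
  have hcont : Continuous fun u : Fin K → ℝ => alternant m u / c :=
    (continuous_matrix fun i j => (continuous_apply j).pow (m i)).matrix_det.div_const c
  obtain ⟨B, hB⟩ := (isCompact_closedBall (0 : Fin K → ℝ) A).exists_bound_of_continuousOn
    hcont.continuousOn
  exact ⟨B, fun Y hY => hB Y.1 (mem_closedBall_zero_iff.2 hY)⟩

variable (hq0 : 0 < q) (hq1 : q < 1) (hzm : zm < 0) (hzp : 0 < zp)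
include hq0 hq1 hzm hzp

lemma isTameKernel_interlacingKernelIter (d : ℕ) :
    IsTameKernel (interlacingKernelIter q zm zp K d) := by
  induction d with
  | zero => exact isTameKernel_one
  | succ d ih => exact (isTameKernel_interlacingKernel hq0 hq1 hzm hzp).comp ih

lemma norm_le_of_linkPow_ne_zero {d : ℕ} {X : Conf q zm zp (K + d)} {Y : Conf q zm zp K}
    (h : linkPow q zm zp K d X Y ≠ 0) : ‖Y‖ ≤ ‖X‖ := by
  rw [linkPow_eq_interlacingKernelIter] at h
  exact (isTameKernel_interlacingKernelIter hq0 hq1 hzm hzp d).norm_le (left_ne_zero_of_mul h)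

lemma hasSum_interlacingKernelIter_mul_alternant_div (m : Fin K → ℕ) (d : ℕ)
    (X : Conf q zm zp (K + d)) :
    HasSum (fun Y => interlacingKernelIter q zm zp K d X Y * (alternant m Y.1 / principalSpec q m))
      (alternant (padExp d m) X.1 / principalSpec q (padExp d m)) := by
  induction d with
  | zero =>
    rw [padExp_zero]
    have := hasSum_single (f := fun Y : Conf q zm zp K =>
      interlacingKernelIter q zm zp K 0 X Y * (alternant m Y.1 / principalSpec q m)) X
      fun Y hY => by simp [interlacingKernelIter, hY.symm]
    simpa [interlacingKernelIter] using this
  | succ d ih =>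
    rw [padExp_succ]
    exact (isTameKernel_interlacingKernel hq0 hq1 hzm hzp).hasSum_comp_mul
      (isTameKernel_interlacingKernelIter hq0 hq1 hzm hzp d) (isBoundedOnBalls_alternant m _) ih
      (hasSum_interlacingKernel_mul_alternant_div hq0 hq1 hzm hzp (padExp d m) X)

lemma hasSum_linkPow_mul_normSchur (m : Fin K → ℕ) (d : ℕ) (X : Conf q zm zp (K + d)) :
    HasSum (fun Y => linkPow q zm zp K d X Y * normSchur q m Y.1)
      (normSchur q (padExp d m) X.1) := by
  unfold normSchur
  rw [div_right_comm]
  refine ((hasSum_interlacingKernelIter_mul_alternant_div hq0 hq1 hzm hzp m d X).div_const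
    (vprod X.1)).congr_fun fun Y => ?_
  have hY := (vprod_pos Y.2.1).ne'
  rw [linkPow_eq_interlacingKernelIter]
  field_simp

end IteratedLinks

section Uniqueness

lemma hasSum_mul_alternant_of_strictMono {ι : Type*} {n : ℕ} {w : ι → ℝ} {u : ι → Fin n → ℝ}
    (h : ∀ m : Fin n → ℕ, StrictMono m → HasSum (fun i => w i * alternant m (u i)) 0)
    (m : Fin n → ℕ) : HasSum (fun i => w i * alternant m (u i)) 0 := by
  by_cases hm : Function.Injective m
  · have hsort : StrictMono (m ∘ Tuple.sort m) :=
      (Tuple.monotone_sort m).strictMono_of_injective (hm.comp (Tuple.sort m).injective)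
    have hsign : ((Equiv.Perm.sign (Tuple.sort m) : ℤ) : ℝ) ≠ 0 :=
      Int.cast_ne_zero.2 (Equiv.Perm.sign _).ne_zero
    have := h _ hsort
    simp only [alternant_comp_perm, mul_left_comm (w _)] at this
    exact (hasSum_mul_left_iff hsign).1 (by simpa using this)
  · simp only [alternant_eq_zero_of_not_injective hm, mul_zero]
    exact hasSum_zero

lemma hasSum_mul_det_eval {ι : Type*} {n : ℕ} {w : ι → ℝ} {u : ι → Fin n → ℝ}
    (h : ∀ m : Fin n → ℕ, StrictMono m → HasSum (fun i => w i * alternant m (u i)) 0)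
    (p : Fin n → Polynomial ℝ) :
    HasSum (fun i => w i * (Matrix.of fun k j => (p k).eval (u i j)).det) 0 := by
  simp only [det_eval_eq_sum_alternant, Finset.mul_sum, mul_left_comm (w _)]
  have := hasSum_sum (s := Fintype.piFinset fun k => (p k).support) fun r _ =>
    (hasSum_mul_alternant_of_strictMono h r).mul_left (∏ k, (p k).coeff (r k))
  simpa only [mul_zero, Finset.sum_const_zero] using this

lemma tsum_mul_prod_eq_zero_of_polynomial {ι κ : Type*} [Fintype κ] {D : ι → ℝ} {A : ℝ}
    {u : ι → κ → ℝ} (hD : Summable D) (hu : ∀ i, D i ≠ 0 → ‖u i‖ ≤ A)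
    (h : ∀ p : Polynomial ℝ, ∑' i, D i * ∏ j, p.eval (u i j) = 0) {g : ℝ → ℝ}
    (hg : Continuous g) : ∑' i, D i * ∏ j, g (u i j) = 0 := by
  obtain ⟨C, hC⟩ := isCompact_Icc.exists_bound_of_continuousOn (s := Set.Icc (-A) A) hg.continuousOn
  choose p hp using fun n : ℕ => exists_polynomial_near_of_continuousOn (-A) A g hg.continuousOn
    (1 / ((n : ℝ) + 1)) Nat.one_div_pos_of_nat
  have hmem {i : ι} (hi : D i ≠ 0) (j : κ) : u i j ∈ Set.Icc (-A) A :=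
    abs_le.1 ((norm_le_pi_norm (u i) j).trans (hu i hi))
  have pointwise (i : ι) : Filter.Tendsto (fun n => D i * ∏ j, (p n).eval (u i j)) Filter.atTop
      (nhds (D i * ∏ j, g (u i j))) := by
    by_cases hi : D i = 0
    · simp [hi]
    refine (tendsto_finsetProd _ fun j _ => tendsto_iff_dist_tendsto_zero.2 ?_).const_mul _
    exact squeeze_zero (fun _ => dist_nonneg) (fun n => (hp n _ (hmem hi j)).le)
      tendsto_one_div_add_atTop_nhds_zero_nat
  have dominated (n : ℕ) (i : ι) :
      ‖D i * ∏ j, (p n).eval (u i j)‖ ≤ |D i| * ∏ _j : κ, (1 + C) := by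
    by_cases hi : D i = 0
    · simp [hi]
    rw [norm_mul, norm_prod]
    refine mul_le_mul_of_nonneg_left (Finset.prod_le_prod (fun _ _ => norm_nonneg _) fun j _ => ?_)
      (abs_nonneg _)
    have hnear := (hp n _ (hmem hi j)).le.trans (Nat.one_div_le_one_div n.zero_le)
    simp only [Nat.cast_zero, zero_add, div_one] at hnear
    calc ‖(p n).eval (u i j)‖ ≤ |(p n).eval (u i j) - g (u i j)| + ‖g (u i j)‖ :=
          norm_le_norm_sub_add _ _
      _ ≤ 1 + C := add_le_add hnear (hC _ (hmem hi j))
  have limit := tendsto_tsum_of_dominated_convergence (hD.abs.mul_right _) pointwise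
    (Filter.Eventually.of_forall dominated)
  simp only [h] at limit
  exact tendsto_nhds_unique limit tendsto_const_nhds

variable {q zm zp : ℝ}

lemma conf_eq_of_range_subset {N : ℕ} {Y Z : Conf q zm zp N}
    (h : Set.range Y.1 ⊆ Set.range Z.1) : Y = Z := by
  have hcard : (Set.range Z.1).ncard ≤ (Set.range Y.1).ncard := by
    rw [← Set.image_univ, ← Set.image_univ, Set.ncard_image_of_injective _ Y.2.1.injective,
      Set.ncard_image_of_injective _ Z.2.1.injective]
  exact Subtype.ext ((Y.2.1.range_inj Z.2.1).1
    (Set.eq_of_subset_of_ncard_le h hcard (Set.finite_range _)))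

variable (hq0 : 0 < q) (hq1 : q < 1) (hzm : zm < 0) (hzp : 0 < zp)
include hq0 hq1 hzm hzp

lemma notMem_closure_Lambda_diff {x : ℝ} (hx : x ∈ Lambda q zm zp) {s : Set ℝ} (hxs : x ∈ s) :
    x ∉ closure (Lambda q zm zp \ s) := by
  have hpos : 0 < |x| * (1 - q) :=
    mul_pos (abs_pos.2 (ne_zero_of_mem_Lambda hq0 hzm hzp hx)) (sub_pos.2 hq1)
  rw [Metric.mem_closure_iff]
  push Not
  refine ⟨_, hpos, fun y hy => ?_⟩
  rw [dist_comm]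
  exact abs_mul_one_sub_le_abs_sub hq0 hq1 hzm hzp hx hy.1 fun h => hy.2 (h ▸ hxs)

lemma exists_continuous_eq_one_eq_zero_Lambda {s : Set ℝ} (hs : s.Finite)
    (hsub : s ⊆ Lambda q zm zp) :
    ∃ g : ℝ → ℝ, Continuous g ∧ (∀ x ∈ s, g x = 1) ∧ ∀ x ∈ Lambda q zm zp \ s, g x = 0 := by
  obtain ⟨g, h0, h1, -⟩ := exists_continuous_zero_one_of_isClosed
    (isClosed_closure (s := Lambda q zm zp \ s)) hs.isClosed
    (Set.disjoint_right.2 fun x hx => notMem_closure_Lambda_diff hq0 hq1 hzm hzp (hsub hx) hx)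
  exact ⟨g, g.continuous, h1, fun x hx => h0 (subset_closure hx)⟩

lemma eq_zero_of_hasSum_mul_prod_eval {N : ℕ} {D : Conf q zm zp N → ℝ} {A : ℝ} (hD : Summable D)
    (hA : ∀ Y, D Y ≠ 0 → ‖Y‖ ≤ A)
    (h : ∀ p : Polynomial ℝ, HasSum (fun Y => D Y * ∏ j, p.eval (Y.1 j)) 0) : D = 0 := by
  ext Z
  obtain ⟨g, hg, hg1, hg0⟩ := exists_continuous_eq_one_eq_zero_Lambda hq0 hq1 hzm hzp
    (Set.finite_range Z.1) (Set.range_subset_iff.2 Z.2.2)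
  have hsum := tsum_mul_prod_eq_zero_of_polynomial hD hA (fun p => (h p).tsum_eq) hg
  rw [tsum_eq_single Z] at hsum
  · simpa [hg1] using hsum
  · intro Y hY
    obtain ⟨_, ⟨j, rfl⟩, hj⟩ := Set.not_subset.1 fun hsub => hY (conf_eq_of_range_subset hsub)
    rw [Finset.prod_eq_zero (Finset.mem_univ j) (hg0 _ ⟨Y.2.2 j, hj⟩), mul_zero]

lemma eq_zero_of_hasSum_mul_normSchur {N : ℕ} {D : Conf q zm zp N → ℝ} {A : ℝ}
    (hA : ∀ Y, D Y ≠ 0 → ‖Y‖ ≤ A)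
    (h : ∀ m : Fin N → ℕ, StrictMono m → HasSum (fun Y => D Y * normSchur q m Y.1) 0) :
    D = 0 := by
  have hD : Summable D := (h Fin.val Fin.val_strictMono).summable.congr fun Y => by
    rw [normSchur_val hq0 hq1 Y.2.1, mul_one]
  have alternants (m : Fin N → ℕ) (hm : StrictMono m) :
      HasSum (fun Y : Conf q zm zp N => D Y / vprod Y.1 * alternant m Y.1) 0 := by
    have := (h m hm).mul_right (principalSpec q m)
    rw [zero_mul] at this
    refine this.congr_fun fun Y => ?_
    have hne := principalSpec_ne_zero hq0 hq1 hm.injective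
    rw [normSchur]
    field_simp
  refine eq_zero_of_hasSum_mul_prod_eval hq0 hq1 hzm hzp hD hA fun p => ?_
  refine (hasSum_mul_det_eval alternants fun k => Polynomial.X ^ (k : ℕ) * p).congr_fun
    fun Y => ?_
  have hY := (vprod_pos Y.2.1).ne'
  rw [det_eval_X_pow_mul, ← vprod_eq_det_vandermonde]
  field_simp

end Uniqueness

theorem link_characterization_general (q zm zp : ℝ) (hq0 : 0 < q) (hq1 : q < 1) (hzm : zm < 0)
    (hzp : 0 < zp) (K d : ℕ) (X : Conf q zm zp (K + d)) (M : Conf q zm zp K → ℝ)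
    (a b : ℝ) (hsupp : ∀ Y : Conf q zm zp K, ¬ (∀ i, Y.1 i ∈ Set.Icc a b) → M Y = 0)
    (hmom : ∀ ν : Fin K → ℤ, Antitone ν → (∀ i, 0 ≤ ν i) →
      HasSum (fun Y : Conf q zm zp K => M Y * schurTilde q K ν Y.1)
        (schurTilde q (K + d) (padSig K (K + d) ν) X.1)) :
    ∀ Y : Conf q zm zp K, M Y = linkPow q zm zp K d X Y := by
  have norm_le_of_ne_zero (Y : Conf q zm zp K) (hY : M Y ≠ 0) : ‖Y‖ ≤ max |a| |b| := by
    have hmem : ∀ i, Y.1 i ∈ Set.Icc a b := by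
      by_contra h
      exact hY (hsupp Y h)
    exact (pi_norm_le_iff_of_nonneg ((abs_nonneg a).trans (le_max_left _ _))).2
      fun i => abs_le_max_abs_abs (hmem i).1 (hmem i).2
  refine fun Y => sub_eq_zero.1 (congrFun (eq_zero_of_hasSum_mul_normSchur hq0 hq1 hzm hzp
    (D := M - linkPow q zm zp K d X) (A := max ‖X‖ (max |a| |b|)) ?_ ?_) Y)
  · intro Y hY
    rcases ne_or_eq (M Y) 0 with hM | hM
    · exact (norm_le_of_ne_zero Y hM).trans (le_max_right _ _)
    · refine (norm_le_of_linkPow_ne_zero hq0 hq1 hzm hzp fun hL => hY ?_).trans (le_max_left _ _)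
      rw [Pi.sub_apply, hM, hL, sub_zero]
  · intro m hm
    have moment := hmom (partOfExp m) (antitone_partOfExp hm) (partOfExp_nonneg hm)
    simp only [schurTilde_partOfExp, schurTilde_padSig_partOfExp] at moment
    simpa [sub_mul] using
      moment.sub (hasSum_linkPow_mul_normSchur hq0 hq1 hzm hzp m d X)

/-- Proposition 2.6(ii): a compactly supported probability measure on 𝔾_K satisfying
the moment relations Σ_Y M(Y) S̃_{ν|K}(Y) = S̃_{ν|N}(X) for all partitions ν ∈ 𝕐(K)
must coincide with Λ^N_K(X,·). -/
theorem link_characterization (q zm zp : ℝ) (hq0 : 0 < q) (hq1 : q < 1) (hzm : zm < 0)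
    (hzp : 0 < zp) (K d : ℕ) (hK : 1 ≤ K) (hd : 1 ≤ d) (X : Conf q zm zp (K + d))
    (M : Conf q zm zp K → ℝ) (hMnonneg : ∀ Y, 0 ≤ M Y) (hMtotal : HasSum M 1)
    (a b : ℝ) (hsupp : ∀ Y : Conf q zm zp K, ¬ (∀ i, Y.1 i ∈ Set.Icc a b) → M Y = 0)
    (hmom : ∀ ν : Fin K → ℤ, Antitone ν → (∀ i, 0 ≤ ν i) →
      HasSum (fun Y : Conf q zm zp K => M Y * schurTilde q K ν Y.1)
        (schurTilde q (K + d) (padSig K (K + d) ν) X.1)) :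
    ∀ Y : Conf q zm zp K, M Y = linkPow q zm zp K d X Y :=
  link_characterization_general q zm zp hq0 hq1 hzm hzp K d X M a b hsupp hmom

end
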